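/- arXiv:2201.05378 — 2 statements merged into one kernel-verified Lean document; each statement's English description precedes it below -/
import Mathlib

section
/- Let p be a prime with p ≡ 1 (mod 4). Then Σ_{k=0}^{(p−1)/4} (−1)^k (1/4)_k^3 / k!^3 ≡ (−1)^{(p−1)/4} · p · Σ_{k=0}^{(p−1)/4} (1/4)_k^2 (1/2)_k / (k! (5/8)_k (9/8)_k) (mod p^2). -/
open Finset

/-- The Pochhammer symbol `(a)_k = a(a+1)⋯(a+k-1)` for rational `a`. -/
def poch (a : ℚ) (k : ℕ) : ℚ := ∏ j ∈ Finset.range k, (a + j)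

/-! Write `x = a + n`, where `p ∣ x`. Modulo `x²` we have `(a)_k² ≡ (a-x)_k (a+x)_k` and `k!² ≡
(1-x)_k (1+x)_k`, so both sums may be replaced by their `x`-deformations. As `a - x = -n`, the
deformed left-hand sum is a terminating well-poised `₃F₂(-1)`, and Whipple's transformation turns it
exactly into `(-1)^n x/a` times the deformed right-hand sum: expand `(1/2)_k / (k! ((a+1)/2)_k
(a/2+1)_k)` by Chu–Vandermonde, exchange the summations, and evaluate the inner sum by
Chu–Vandermonde again. On the right, `p` enters the denominators `a ((a+1)/2)_k (a/2+1)_k = 4⁻ᵏ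
(a)_{2k+1}` only through the single factor `a + n = x`, which the numerator of `x/a` cancels. The
congruence modulo `p²` is the case `a = 1/4`, `x = p/4`. -/

open Polynomial

/-! ### Pochhammer symbols -/

lemma poch_zero (a : ℚ) : poch a 0 = 1 := prod_range_zero _

lemma poch_succ (a : ℚ) (k : ℕ) : poch a (k + 1) = poch a k * (a + k) := prod_range_succ _ _

lemma poch_add (a : ℚ) (k m : ℕ) : poch a (k + m) = poch a k * poch (a + k) m := by
  simp only [poch, prod_range_add, Nat.cast_add, add_assoc]

lemma poch_succ_left (a : ℚ) (k : ℕ) : poch a (k + 1) = a * poch (a + 1) k := by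
  rw [add_comm k 1, poch_add]
  simp [poch]

lemma poch_ne_zero_of_le {a : ℚ} {k m : ℕ} (hkm : k ≤ m) (h : poch a m ≠ 0) : poch a k ≠ 0 := by
  obtain ⟨l, rfl⟩ := Nat.exists_eq_add_of_le hkm
  exact left_ne_zero_of_mul (poch_add a k l ▸ h)

lemma poch_eq_eval_ascPochhammer (a : ℚ) (k : ℕ) : poch a k = (ascPochhammer ℚ k).eval a := by
  induction k with
  | zero => simp [poch_zero]
  | succ k ih => rw [poch_succ, ih, ascPochhammer_succ_eval]

lemma poch_one (k : ℕ) : poch 1 k = k.factorial := by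
  rw [poch_eq_eval_ascPochhammer, ascPochhammer_eval_one]

lemma poch_neg (a : ℚ) (k : ℕ) : poch (-a) k = (-1) ^ k * poch (a - k + 1) k := by
  simp only [poch_eq_eval_ascPochhammer, ascPochhammer_eval_neg_eq_descPochhammer,
    descPochhammer_eval_eq_ascPochhammer]

lemma poch_neg_natCast (m k : ℕ) : poch (-m) k = (-1) ^ k * m.descFactorial k := by
  rw [poch_eq_eval_ascPochhammer, ascPochhammer_eval_neg_eq_descPochhammer,
    descPochhammer_eval_eq_descFactorial]

lemma poch_two_mul (a : ℚ) (k : ℕ) :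
    poch a (2 * k) = 4 ^ k * (poch (a / 2) k * poch ((a + 1) / 2) k) := by
  induction k with
  | zero => simp [poch_zero]
  | succ k ih =>
    rw [Nat.mul_succ]
    simp only [poch_succ, ih]
    push_cast
    ring

lemma poch_natCast_add_one_self (k : ℕ) : poch (k + 1) k = 4 ^ k * poch (1 / 2) k := by
  have hdup := poch_two_mul 1 k
  rw [two_mul, poch_add, add_self_div_two, poch_one, add_comm 1 (k : ℚ)] at hdup
  have hfact : (k.factorial : ℚ) ≠ 0 := Nat.cast_ne_zero.mpr k.factorial_ne_zero
  exact mul_left_cancel₀ hfact (by linear_combination hdup)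

/-! ### Whipple's transformation -/

theorem sum_choose_mul_poch_mul_poch (m : ℕ) (b c : ℚ) :
    ∑ i ∈ range (m + 1), m.choose i * ((-1) ^ i * poch b i * poch (c + i) (m - i)) =
      poch (c - b) m := by
  have hdesc (r : ℚ) (k : ℕ) : (descPochhammer ℤ k).smeval r = poch (r - k + 1) k := by
    rw [descPochhammer_smeval_eq_ascPochhammer, ascPochhammer_smeval_eq_eval,
      poch_eq_eval_ascPochhammer]
  have hadd := Ring.descPochhammer_smeval_add m (Commute.all (-b) (c + m - 1))
  simp only [hdesc, Nat.sum_antidiagonal_eq_sum_range_succ_mk] at hadd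
  convert hadd.symm using 2 with i hi
  · have him : i ≤ m := mem_range_succ_iff.mp hi
    have hb : (-1) ^ i * poch b i = poch (-b - i + 1) i := by
      rw [← neg_neg b, poch_neg (-b), neg_neg, ← mul_assoc, ← mul_pow, neg_one_mul, neg_neg,
        one_pow, one_mul]
    rw [hb, Nat.cast_sub him]
    ring_nf
  · ring

theorem sum_poch_neg_natCast_mul_poch_div (m : ℕ) (b : ℚ) {c : ℚ} (hc : poch c m ≠ 0) :
    ∑ i ∈ range (m + 1), poch (-m) i * poch b i / (i.factorial * poch c i) =
      poch (c - b) m / poch c m := by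
  rw [← sum_choose_mul_poch_mul_poch, sum_div]
  refine sum_congr rfl fun i hi ↦ ?_
  have hsplit : poch c m = poch c i * poch (c + i) (m - i) := by
    rw [← poch_add, Nat.add_sub_cancel' (mem_range_succ_iff.mp hi)]
  rw [hsplit] at hc ⊢
  have hfact : (i.factorial : ℚ) ≠ 0 := Nat.cast_ne_zero.mpr i.factorial_ne_zero
  have hc₁ := left_ne_zero_of_mul hc
  have hc₂ := right_ne_zero_of_mul hc
  rw [poch_neg_natCast, Nat.descFactorial_eq_factorial_mul_choose, Nat.cast_mul]
  field_simp

lemma poch_half_div_eq_sum (j : ℕ) {a : ℚ} (ha : poch (a + 1) (2 * j) ≠ 0) :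
    poch (1 / 2) j / (j.factorial * poch ((a + 1) / 2) j * poch (a / 2 + 1) j) =
      ∑ r ∈ range (j + 1), (-1) ^ r * poch a r /
        (r.factorial * (j - r).factorial * poch (a + 1) (j + r)) := by
  have hdup := poch_two_mul (a + 1) j
  rw [show (a + 1 + 1) / 2 = a / 2 + 1 by ring] at hdup
  have hsplit : poch (a + 1) (2 * j) = poch (a + 1) j * poch (a + 1 + j) j := by
    rw [two_mul, poch_add]
  have hne := hsplit ▸ ha
  have hgauss := sum_poch_neg_natCast_mul_poch_div j a (right_ne_zero_of_mul hne)
  have hfact (k : ℕ) : (k.factorial : ℚ) ≠ 0 := Nat.cast_ne_zero.mpr k.factorial_ne_zero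
  calc poch (1 / 2) j / (j.factorial * poch ((a + 1) / 2) j * poch (a / 2 + 1) j)
      = 4 ^ j * poch (1 / 2) j / (j.factorial * poch (a + 1) (2 * j)) := by
        rw [hdup]
        field_simp
    _ = poch (a + 1 + j - a) j / poch (a + 1 + j) j / (j.factorial * poch (a + 1) j) := by
        rw [show a + 1 + j - a = j + 1 by ring, poch_natCast_add_one_self, hsplit]
        field_simp
    _ = _ := by
        rw [← hgauss, sum_div]
        refine sum_congr rfl fun r hr ↦ ?_
        rw [poch_neg_natCast, poch_add,
          ← Nat.factorial_mul_descFactorial (mem_range_succ_iff.mp hr)]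
        push_cast
        have : (j.descFactorial r : ℚ) ≠ 0 := by
          simpa [Nat.descFactorial_eq_zero_iff_lt, Nat.lt_succ_iff] using hr
        have := hfact (j - r)
        field_simp

lemma sum_poch_add_mul_poch_neg_div (r m : ℕ) {a b : ℚ} (hab : poch (a + 1 - b) r ≠ 0)
    (ha : poch (a + 1) (r + m + r) ≠ 0) :
    ∑ i ∈ range (m + 1), poch b (r + i) * poch (-(r + m : ℕ)) (r + i) /
        (i.factorial * poch (a + 1) (r + i + r)) =
      poch (a + 1 - b) (r + m) / poch (a + 1) (r + m) *
        (poch b r * poch (-(r + m : ℕ)) r /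
          (poch (a + 1 - b) r * poch (a + 1 + (r + m : ℕ)) r)) := by
  have hsplit : poch (a + 1) (r + m + r) =
      poch (a + 1) (r + r) * poch (a + 1 + (r + r : ℕ)) m := by
    rw [← poch_add, add_right_comm]
  have hgauss := sum_poch_neg_natCast_mul_poch_div m (b + r) (right_ne_zero_of_mul (hsplit ▸ ha))
  calc _ = poch b r * poch (-(r + m : ℕ)) r / poch (a + 1) (r + r) *
        ∑ i ∈ range (m + 1), poch (-m) i * poch (b + r) i /
          (i.factorial * poch (a + 1 + (r + r : ℕ)) i) := by
        rw [mul_sum]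
        refine sum_congr rfl fun i _ ↦ ?_
        rw [add_right_comm r i r, poch_add b, poch_add (-_), poch_add (a + 1),
          show -((r + m : ℕ) : ℚ) + r = -m by push_cast; ring]
        ring
    _ = poch b r * poch (-(r + m : ℕ)) r * poch (a + 1 - b + r) m / poch (a + 1) (r + m + r) := by
        rw [hgauss, hsplit, div_mul_div_comm]
        push_cast
        ring_nf
    _ = _ := by
        rw [poch_add (a + 1) (r + m), poch_add (a + 1 - b)]
        field_simp

theorem sum_poch_wellPoised_eq (n : ℕ) {a b : ℚ} (hab : poch (a + 1 - b) n ≠ 0)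
    (ha : poch (a + 1) (2 * n) ≠ 0) :
    ∑ k ∈ range (n + 1), (-1) ^ k * poch a k * (poch b k * poch (-n) k) /
        (k.factorial * (poch (a + 1 - b) k * poch (a + 1 + n) k)) =
      poch (a + 1) n / poch (a + 1 - b) n *
        ∑ k ∈ range (n + 1), poch b k * poch (-n) k * poch (1 / 2) k /
          (k.factorial * poch ((a + 1) / 2) k * poch (a / 2 + 1) k) := by
  have hswap : ∑ k ∈ range (n + 1), poch b k * poch (-n) k * poch (1 / 2) k /
          (k.factorial * poch ((a + 1) / 2) k * poch (a / 2 + 1) k) =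
      ∑ r ∈ range (n + 1), (-1) ^ r * poch a r / r.factorial * ∑ i ∈ range (n + 1 - r),
        poch b (r + i) * poch (-n) (r + i) / (i.factorial * poch (a + 1) (r + i + r)) := by
    simp only [mul_sum]
    rw [← sum_range_diag_flip]
    refine sum_congr rfl fun j hj ↦ ?_
    have hjn : 2 * j ≤ 2 * n := by gcongr; exact mem_range_succ_iff.mp hj
    rw [mul_div_assoc, poch_half_div_eq_sum j (poch_ne_zero_of_le hjn ha), mul_sum]
    refine sum_congr rfl fun r hr ↦ ?_
    rw [Nat.add_sub_cancel' (mem_range_succ_iff.mp hr)]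
    ring
  rw [hswap, mul_sum]
  refine sum_congr rfl fun r hr ↦ ?_
  obtain ⟨m, rfl⟩ := Nat.exists_eq_add_of_le (mem_range_succ_iff.mp hr)
  rw [show r + m + 1 - r = m + 1 by omega,
    sum_poch_add_mul_poch_neg_div r m (poch_ne_zero_of_le (by omega) hab)
      (poch_ne_zero_of_le (by omega) ha)]
  have ha' : poch (a + 1) (r + m) ≠ 0 := poch_ne_zero_of_le (by omega) ha
  field_simp

theorem sum_poch_wellPoised_eq_of_eq_add (n : ℕ) {a x : ℚ} (hx : x = a + n)
    (ha : poch a (2 * n + 1) ≠ 0) :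
    ∑ k ∈ range (n + 1), (-1) ^ k * poch a k * (poch (a - x) k * poch (a + x) k) /
        (k.factorial * (poch (1 - x) k * poch (1 + x) k)) =
      (-1) ^ n * (x / a) *
        ∑ k ∈ range (n + 1), poch (a - x) k * poch (a + x) k * poch (1 / 2) k /
          (k.factorial * poch ((a + 1) / 2) k * poch (a / 2 + 1) k) := by
  have ha₀ : a * poch (a + 1) (2 * n) ≠ 0 := poch_succ_left a _ ▸ ha
  have han : poch a n ≠ 0 := poch_ne_zero_of_le (by omega) ha
  have hrefl : poch (1 - x) n = (-1) ^ n * poch a n := by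
    rw [← neg_sub, poch_neg]
    congr 2
    linear_combination hx
  have hpref : poch (a + 1) n / poch (1 - x) n = (-1) ^ n * (x / a) := by
    have hstep : a * poch (a + 1) n = poch a n * x := by rw [← poch_succ_left, poch_succ, hx]
    have hsign : ((-1 : ℚ) ^ n) * (-1) ^ n = 1 := by rw [← mul_pow]; simp
    have := left_ne_zero_of_mul ha₀
    rw [hrefl, mul_div_assoc', div_eq_div_iff (by positivity) this]
    linear_combination hstep - poch a n * x * hsign
  have hne : poch (1 - x) n ≠ 0 := by rw [hrefl]; positivity
  rw [show 1 - x = a + 1 - (a + x) by ring] at hne hpref ⊢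
  rw [← hpref, show a - x = -n by linear_combination -hx,
    show 1 + x = a + 1 + n by linear_combination hx]
  simp only [mul_comm (poch (-n) _)]
  exact sum_poch_wellPoised_eq n hne (right_ne_zero_of_mul ha₀)

/-! ### Congruences for Pochhammer symbols -/

section Padic

variable {p : ℕ} [Fact p.Prime]

lemma padicNorm_add_le {q r c : ℚ} (hq : padicNorm p q ≤ c) (hr : padicNorm p r ≤ c) :
    padicNorm p (q + r) ≤ c :=
  padicNorm.nonarchimedean.trans (max_le hq hr)

lemma padicNorm_sub_le {q r c : ℚ} (hq : padicNorm p q ≤ c) (hr : padicNorm p r ≤ c) :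
    padicNorm p (q - r) ≤ c :=
  padicNorm.sub.trans (max_le hq hr)

lemma padicNorm_mul_le_of_le_one {q r c : ℚ} (hq : padicNorm p q ≤ 1) (hr : padicNorm p r ≤ c) :
    padicNorm p (q * r) ≤ c := by
  rw [padicNorm.mul]
  exact (mul_le_of_le_one_left (padicNorm.nonneg r) hq).trans hr

lemma padicNorm_pow (q : ℚ) (k : ℕ) : padicNorm p (q ^ k) = padicNorm p q ^ k :=
  IsAbsoluteValue.abv_pow (padicNorm p) q k

lemma padicNorm_neg_one_pow (k : ℕ) : padicNorm p ((-1) ^ k) = 1 := by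
  rw [padicNorm_pow, padicNorm.neg, padicNorm.one, one_pow]

lemma padicNorm_eq_one_of_sub_lt {q r : ℚ} (hr : padicNorm p r = 1)
    (hqr : padicNorm p (r - q) < 1) : padicNorm p q = 1 := by
  have hne : padicNorm p r ≠ padicNorm p (-(r - q)) := by
    rw [padicNorm.neg, hr]
    exact hqr.ne'
  have hmax := padicNorm.add_eq_max_of_ne hne
  rwa [padicNorm.neg, hr, max_eq_left hqr.le, neg_sub, add_sub_cancel] at hmax

lemma padicNorm_poch_le_one {a : ℚ} (ha : padicNorm p a ≤ 1) (k : ℕ) :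
    padicNorm p (poch a k) ≤ 1 := by
  induction k with
  | zero => simp [poch_zero]
  | succ k ih =>
    rw [poch_succ]
    exact padicNorm_mul_le_of_le_one ih (padicNorm_add_le ha (padicNorm.of_nat k))

lemma padicNorm_factorial_eq_one {k : ℕ} (hk : k < p) : padicNorm p k.factorial = 1 :=
  (padicNorm.nat_eq_one_iff _).mpr fun h ↦
    hk.not_ge (((Fact.out : p.Prime).dvd_factorial).mp h)

theorem padicNorm_poch_sq_sub_le {a x : ℚ} (ha : padicNorm p a ≤ 1) (hx : padicNorm p x ≤ 1)
    (k : ℕ) :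
    padicNorm p (poch a k ^ 2 - poch (a - x) k * poch (a + x) k) ≤ padicNorm p x ^ 2 := by
  induction k with
  | zero => simp [poch_zero, sq_nonneg]
  | succ k ih =>
    have hrec : poch a (k + 1) ^ 2 - poch (a - x) (k + 1) * poch (a + x) (k + 1) =
        (a + k) ^ 2 * (poch a k ^ 2 - poch (a - x) k * poch (a + x) k) +
          poch (a - x) k * poch (a + x) k * x ^ 2 := by
      simp only [poch_succ]
      ring
    rw [hrec]
    refine padicNorm_add_le (padicNorm_mul_le_of_le_one ?_ ih)
      (padicNorm_mul_le_of_le_one ?_ (padicNorm_pow x 2).le)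
    · rw [padicNorm_pow]
      exact pow_le_one₀ (padicNorm.nonneg _) (padicNorm_add_le ha (padicNorm.of_nat k))
    · exact padicNorm_mul_le_of_le_one (padicNorm_poch_le_one (padicNorm_sub_le ha hx) k)
        (padicNorm_poch_le_one (padicNorm_add_le ha hx) k)

lemma padicNorm_poch_one_sub_mul_poch_one_add {x : ℚ} (hx : padicNorm p x < 1) {k : ℕ}
    (hk : k < p) : padicNorm p (poch (1 - x) k * poch (1 + x) k) = 1 := by
  have hsq : padicNorm p (poch 1 k ^ 2) = 1 := by
    rw [poch_one, padicNorm_pow, padicNorm_factorial_eq_one hk, one_pow]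
  refine padicNorm_eq_one_of_sub_lt hsq ?_
  exact (padicNorm_poch_sq_sub_le padicNorm.one.le hx.le k).trans_lt
    (pow_lt_one₀ (padicNorm.nonneg x) hx two_ne_zero)

variable {a : ℚ} {n : ℕ}

lemma padicNorm_add_natCast_eq_one (ha : padicNorm p (a + n) < 1) {i : ℕ}
    (hi : ¬ (p : ℤ) ∣ i - n) : padicNorm p (a + i) = 1 := by
  have hunit := (padicNorm.int_eq_one_iff (p := p) _).mpr hi
  refine padicNorm_eq_one_of_sub_lt hunit ?_
  rw [← padicNorm.neg]
  push_cast
  rwa [show -((i : ℚ) - n - (a + i)) = a + n by ring]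

lemma padicNorm_poch (a : ℚ) (k : ℕ) :
    padicNorm p (poch a k) = ∏ j ∈ range k, padicNorm p (a + j) :=
  map_prod (IsAbsoluteValue.toAbsoluteValue (padicNorm p)) _ _

lemma padicNorm_add_natCast_le_padicNorm_poch (hn : n < p) (ha : padicNorm p (a + n) < 1) {m : ℕ}
    (hm : m ≤ n + p) : padicNorm p (a + n) ≤ padicNorm p (poch a m) := by
  have hunit : ∀ i ∈ range m, i ≠ n → padicNorm p (a + i) = 1 := fun i hi hin ↦ by
    refine padicNorm_add_natCast_eq_one ha fun hdvd ↦ hin ?_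
    have him := mem_range.mp hi
    have hzero := Int.eq_zero_of_abs_lt_dvd hdvd (by rw [abs_lt]; omega)
    omega
  rw [padicNorm_poch]
  by_cases hnm : n ∈ range m
  · rw [prod_eq_single_of_mem n hnm hunit]
  · rw [prod_eq_one fun i hi ↦ hunit i hi (ne_of_mem_of_not_mem hi hnm)]
    exact ha.le

lemma padicNorm_div_poch_half_mul_poch_half_le_one (hn : n < p) (ha : padicNorm p (a + n) < 1)
    {k : ℕ} (hk : k ≤ n) :
    padicNorm p ((a + n) / (a * (poch ((a + 1) / 2) k * poch (a / 2 + 1) k))) ≤ 1 := by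
  have hdup : poch a (2 * k + 1) = 4 ^ k * (a * (poch ((a + 1) / 2) k * poch (a / 2 + 1) k)) := by
    rw [poch_succ_left, poch_two_mul, show (a + 1 + 1) / 2 = a / 2 + 1 by ring, mul_left_comm]
  have hscale : (a + n) / (a * (poch ((a + 1) / 2) k * poch (a / 2 + 1) k)) =
      (4 ^ k : ℕ) * ((a + n) / poch a (2 * k + 1)) := by
    rw [hdup, Nat.cast_pow, Nat.cast_ofNat, mul_div_assoc', mul_div_mul_left _ _ (by positivity)]
  rw [hscale]
  refine padicNorm_mul_le_of_le_one (padicNorm.of_nat _) ?_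
  rw [padicNorm.div]
  exact div_le_one_of_le₀ (padicNorm_add_natCast_le_padicNorm_poch hn ha (by omega))
    (padicNorm.nonneg _)

lemma padicNorm_sum_cube_sub_sum_wellPoised_le {x : ℚ} (hn : n < p) (ha : padicNorm p a ≤ 1)
    (hx : padicNorm p x < 1) :
    padicNorm p ((∑ k ∈ range (n + 1), (-1) ^ k * poch a k ^ 3 / (k.factorial : ℚ) ^ 3) -
        ∑ k ∈ range (n + 1), (-1) ^ k * poch a k * (poch (a - x) k * poch (a + x) k) /
          (k.factorial * (poch (1 - x) k * poch (1 + x) k))) ≤ padicNorm p x ^ 2 := by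
  rw [← sum_sub_distrib]
  refine padicNorm.sum_le' (fun k hk ↦ ?_) (sq_nonneg _)
  have hkp : k < p := (mem_range_succ_iff.mp hk).trans_lt hn
  have hnum := padicNorm_poch_sq_sub_le ha hx.le k
  have hden := padicNorm_poch_sq_sub_le padicNorm.one.le hx.le k
  have hD := padicNorm_poch_one_sub_mul_poch_one_add hx hkp
  have hF := padicNorm_factorial_eq_one hkp
  have hA := padicNorm_poch_le_one ha k
  rw [poch_one] at hden
  set A := poch a k
  set B := poch (a - x) k * poch (a + x) k
  set D := poch (1 - x) k * poch (1 + x) k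
  set F := (k.factorial : ℚ)
  have hB : padicNorm p B ≤ 1 := padicNorm_mul_le_of_le_one
    (padicNorm_poch_le_one (padicNorm_sub_le ha hx.le) k)
    (padicNorm_poch_le_one (padicNorm_add_le ha hx.le) k)
  have hF₀ : F ≠ 0 := Nat.cast_ne_zero.mpr k.factorial_ne_zero
  have hD₀ : D ≠ 0 := fun h ↦ by simp [h] at hD
  have hterm : (-1) ^ k * A ^ 3 / F ^ 3 - (-1) ^ k * A * B / (F * D) =
      (-1) ^ k * A / (F ^ 3 * D) * (D * (A ^ 2 - B) - B * (F ^ 2 - D)) := by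
    field_simp
    ring
  rw [hterm]
  refine padicNorm_mul_le_of_le_one ?_ (padicNorm_sub_le
    (padicNorm_mul_le_of_le_one hD.le hnum) (padicNorm_mul_le_of_le_one hB hden))
  rwa [padicNorm.div, padicNorm.mul, padicNorm.mul, padicNorm_neg_one_pow, padicNorm_pow, hF, hD,
    one_pow, one_mul, one_mul, div_one]

lemma padicNorm_self_div_natCast {d : ℕ} (hd : ¬ p ∣ d) : padicNorm p (p / d) = (p : ℚ)⁻¹ := by
  rw [padicNorm.div, padicNorm.padicNorm_p_of_prime, (padicNorm.nat_eq_one_iff d).mpr hd, div_one]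

lemma padicNorm_one_half_le_one (hp : p ≠ 2) : padicNorm p (1 / 2) ≤ 1 := by
  have htwo : padicNorm p (2 : ℕ) = 1 := padicNorm.padicNorm_of_prime_of_ne hp
  rw [Nat.cast_ofNat] at htwo
  rw [padicNorm.div, padicNorm.one, htwo, div_one]

lemma padicNorm_mul_sum_half_sub_le {x : ℚ} (hp : p ≠ 2) (hn : n < p) (hx : x = a + n)
    (hx_lt : padicNorm p x < 1) (ha : padicNorm p a ≤ 1) :
    padicNorm p ((-1) ^ n * (x / a) *
          (∑ k ∈ range (n + 1), poch (a - x) k * poch (a + x) k * poch (1 / 2) k /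
            (k.factorial * poch ((a + 1) / 2) k * poch (a / 2 + 1) k)) -
        (-1) ^ n * (x / a) *
          ∑ k ∈ range (n + 1), poch a k ^ 2 * poch (1 / 2) k /
            (k.factorial * poch ((a + 1) / 2) k * poch (a / 2 + 1) k)) ≤ padicNorm p x ^ 2 := by
  rw [← mul_sub, ← sum_sub_distrib, mul_sum]
  refine padicNorm.sum_le' (fun k hk ↦ ?_) (sq_nonneg _)
  have hkn : k ≤ n := mem_range_succ_iff.mp hk
  have hsq := padicNorm_poch_sq_sub_le ha hx_lt.le k
  have hquot := padicNorm_div_poch_half_mul_poch_half_le_one hn (hx ▸ hx_lt) hkn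
  have hhalf := padicNorm_poch_le_one (padicNorm_one_half_le_one hp) k
  have hF := padicNorm_factorial_eq_one (hkn.trans_lt hn)
  rw [← hx] at hquot
  have hterm (A B H F E₁ E₂ : ℚ) :
      (-1) ^ n * (x / a) * (B * H / (F * E₁ * E₂) - A ^ 2 * H / (F * E₁ * E₂)) =
      (-1) ^ (n + 1) * H / F * (x / (a * (E₁ * E₂)) * (A ^ 2 - B)) := by
    ring
  rw [hterm]
  refine padicNorm_mul_le_of_le_one ?_ (padicNorm_mul_le_of_le_one hquot hsq)
  rwa [padicNorm.div, padicNorm.mul, padicNorm_neg_one_pow, one_mul, hF, div_one]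

end Padic

theorem stmt14_general {p n : ℕ} [Fact p.Prime] (hp : p ≠ 2) (hn : n < p) {a : ℚ}
    (han : a + n ≠ 0) (ha : padicNorm p (a + n) < 1) :
    padicNorm p ((∑ k ∈ range (n + 1), (-1) ^ k * poch a k ^ 3 / (k.factorial : ℚ) ^ 3) -
        (-1) ^ n * ((a + n) / a) *
          ∑ k ∈ range (n + 1), poch a k ^ 2 * poch (1 / 2) k /
            (k.factorial * poch ((a + 1) / 2) k * poch (a / 2 + 1) k)) ≤
      padicNorm p (a + n) ^ 2 := by
  have ha_int : padicNorm p a ≤ 1 := by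
    simpa using padicNorm_sub_le ha.le (padicNorm.of_nat n)
  have hpoch : poch a (2 * n + 1) ≠ 0 := fun hzero ↦ by
    have hle := padicNorm_add_natCast_le_padicNorm_poch (m := 2 * n + 1) hn ha (by omega)
    rw [hzero, padicNorm.zero] at hle
    exact padicNorm.nonzero han (hle.antisymm (padicNorm.nonneg _))
  have hleft := padicNorm_sum_cube_sub_sum_wellPoised_le hn ha_int ha
  have hright := padicNorm_mul_sum_half_sub_le hp hn rfl ha ha_int
  rw [← sum_poch_wellPoised_eq_of_eq_add n rfl hpoch] at hright
  simpa only [sub_add_sub_cancel] using padicNorm_add_le hleft hright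

theorem padicNorm_sum_poch_one_div_sub_le {p n d : ℕ} [Fact p.Prime] (hp : p ≠ 2)
    (hpn : p = d * n + 1) :
    padicNorm p ((∑ k ∈ range (n + 1), (-1) ^ k * poch (1 / d) k ^ 3 / (k.factorial : ℚ) ^ 3) -
        (-1) ^ n * p *
          ∑ k ∈ range (n + 1), poch (1 / d) k ^ 2 * poch (1 / 2) k /
            (k.factorial * poch ((1 / d + 1) / 2) k * poch (1 / d / 2 + 1) k)) ≤
      ((p : ℚ) ^ 2)⁻¹ := by
  have hprime : p.Prime := Fact.out
  have hd₀ : d ≠ 0 := by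
    rintro rfl
    exact hprime.ne_one (by simpa using hpn)
  have hpd : ¬ p ∣ d := fun h ↦
    hprime.not_dvd_one ((Nat.dvd_add_right (h.mul_right n)).mp hpn.dvd)
  have hadd : 1 / (d : ℚ) + n = p / d := by
    rw [hpn]
    push_cast
    field_simp
    ring
  have hnorm := padicNorm_self_div_natCast hpd
  have hn : n < p := by nlinarith [Nat.pos_of_ne_zero hd₀]
  have hmain := stmt14_general hp hn (a := 1 / d)
    (by rw [hadd]; exact div_ne_zero (by exact_mod_cast hprime.ne_zero) (by exact_mod_cast hd₀))
    (by rw [hadd, hnorm]; exact inv_lt_one_of_one_lt₀ (by exact_mod_cast hprime.one_lt))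
  have hquot : (p : ℚ) / d / (1 / d) = p := by field_simp
  rwa [hadd, hnorm, hquot, inv_pow] at hmain

theorem stmt14 (p : ℕ) [Fact p.Prime] (hp4 : p % 4 = 1) :
    ‖(((∑ k ∈ Finset.range ((p - 1) / 4 + 1),
          (-1 : ℚ) ^ k * poch (1/4) k ^ 3 / ((k.factorial : ℚ)) ^ 3) -
        ((-1 : ℚ) ^ ((p - 1) / 4) * p *
          ∑ k ∈ Finset.range ((p - 1) / 4 + 1),
            poch (1/4) k ^ 2 * poch (1/2) k /
              ((k.factorial : ℚ) * poch (5/8) k * poch (9/8) k)) : ℚ) : ℚ_[p])‖ ≤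
      (p : ℝ) ^ (-2 : ℤ) := by
  have hmain := padicNorm_sum_poch_one_div_sub_le (p := p) (n := (p - 1) / 4) (d := 4)
    (by omega) (by omega)
  rw [Nat.cast_ofNat, show ((1 : ℚ) / 4 + 1) / 2 = 5 / 8 by norm_num,
    show (1 : ℚ) / 4 / 2 + 1 = 9 / 8 by norm_num] at hmain
  rw [Padic.eq_padicNorm]
  exact (Rat.cast_le.mpr hmain).trans_eq (by push_cast; rw [zpow_neg]; norm_cast)
end

section
/- Let p be a prime with p ≡ 1 (mod 4). Then Σ_{k=0}^{(p−1)/4} (−1)^k (8k+1) (1/4)_k^3 / k!^3 ≡ (−1)^{(p−1)/4} · p (mod p^3). -/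
open Finset

/-!
Put `N = d n + 1` (for the theorem `d = 4` and `N = p`) and deform every cube `x ^ 3` in the sum to
`x (x ^ 2 - y)`. Clearing denominators turns the deformed sum minus `(-1) ^ n N` into a polynomial
`E` in `y` with integer coefficients.

* Modulo `N` one has `d j + 1 = -d (n - j)`, so the summands at `k` and `n - k` cancel for every
  `y`, and all coefficients of `E` are divisible by `N`.
* At `y = N ^ 2` the deformed sum terminates naturally and is an instance of the classical summation
  of a very well poised hypergeometric series, which says that `E (N ^ 2) = 0`.

Hence `N * N ^ 2` divides `E (N ^ 2) - E 0 = -E 0`. The cleared denominator at `y = 0` is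
`(d ^ n n!) ^ 3`, which is prime to `p`.
-/

lemma sum_two_mul_sub_mul_eq_zero {R : Type*} [CommRing R] {n : ℕ} {s : ℕ → R}
    (hs : ∀ k ≤ n, s (n - k) = s k) :
    ∑ k ∈ range (n + 1), (2 * k - n : R) * s k = 0 := by
  refine sum_involution (fun k _ ↦ n - k) (fun k hk ↦ ?_) (fun k hk hne heq ↦ hne ?_)
    (fun k _ ↦ by simp) (fun k hk ↦ Nat.sub_sub_self (mem_range_succ_iff.mp hk))
  · have hk : k ≤ n := mem_range_succ_iff.mp hk
    rw [hs k hk, Nat.cast_sub hk]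
    ring
  · have hn : n = 2 * k := by have := mem_range_succ_iff.mp hk; omega
    simp [hn]

section SplitProd

variable {R : Type*} [CommRing R]

/-- The product of `f` over `[0, k)` and of `g` over `[k, n)`: the numerator of `∏ j < k, f j / g j`
over the common denominator `∏ j < n, g j`. -/
def splitProd (f g : ℕ → R) (n k : ℕ) : R := (∏ j ∈ range k, f j) * ∏ j ∈ Ico k n, g j

lemma splitProd_congr {f f' g g' : ℕ → R} {n k : ℕ} (hf : ∀ j < k, f j = f' j)
    (hg : ∀ j < n, g j = g' j) : splitProd f g n k = splitProd f' g' n k := by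
  rw [splitProd, prod_congr rfl fun j hj ↦ hf j (mem_range.mp hj),
    prod_congr rfl fun j hj ↦ hg j (mem_Ico.mp hj).2, splitProd]

lemma splitProd_mul (f f' g g' : ℕ → R) (n k : ℕ) :
    splitProd (fun j ↦ f j * f' j) (fun j ↦ g j * g' j) n k =
      splitProd f g n k * splitProd f' g' n k := by
  simp only [splitProd, prod_mul_distrib]
  ring

lemma splitProd_neg_left (f g : ℕ → R) (n k : ℕ) :
    splitProd (fun j ↦ -f j) g n k = (-1) ^ k * splitProd f g n k := by
  simp only [splitProd, prod_neg, card_range, mul_assoc]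

lemma splitProd_const_mul (c : R) (f g : ℕ → R) {n k : ℕ} (hk : k ≤ n) :
    splitProd (fun j ↦ c * f j) (fun j ↦ c * g j) n k = c ^ n * splitProd f g n k := by
  rw [splitProd_mul, splitProd, prod_const, prod_const, card_range, Nat.card_Ico, ← pow_add,
    Nat.add_sub_cancel' hk]

lemma splitProd_succ_left (f g : ℕ → R) {n k : ℕ} (hk : k ≤ n) :
    splitProd f g (n + 1) k = g k * splitProd f (fun j ↦ g (j + 1)) n k := by
  rw [splitProd, splitProd, prod_eq_prod_Ico_succ_bot (Nat.lt_succ_of_le hk), prod_Ico_add' g]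
  ring

lemma splitProd_succ_succ (f g : ℕ → R) (n k : ℕ) :
    splitProd f g (n + 1) (k + 1) = f k * splitProd f (fun j ↦ g (j + 1)) n k := by
  rw [splitProd, splitProd, prod_range_succ, prod_Ico_add' g]
  ring

lemma splitProd_shift (f g : ℕ → R) {n k : ℕ} (hk : k ≤ n) :
    f k * g k * splitProd f (fun j ↦ g (j + 1)) n k =
      f 0 * g n * splitProd (fun j ↦ f (j + 1)) g n k := by
  have hf : (∏ j ∈ range k, f j) * f k = (∏ j ∈ range k, f (j + 1)) * f 0 := by
    rw [← prod_range_succ, prod_range_succ']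
  have hg : g k * ∏ j ∈ Ico k n, g (j + 1) = (∏ j ∈ Ico k n, g j) * g n := by
    rw [← prod_Ico_succ_top hk, prod_eq_prod_Ico_succ_bot (Nat.lt_succ_of_le hk), prod_Ico_add' g]
  rw [splitProd, splitProd]
  linear_combination g k * (∏ j ∈ Ico k n, g (j + 1)) * hf + (∏ j ∈ range k, f (j + 1)) * f 0 * hg

lemma splitProd_natCast_sub {n k : ℕ} (hk : k ≤ n) :
    splitProd (fun j ↦ (n - j : R)) (fun j ↦ (j + 1 : R)) n k = n.factorial * n.choose k := by
  have hdesc : ∏ j ∈ range k, (n - j : R) = (k.factorial * n.choose k : ℕ) := by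
    rw [← Nat.descFactorial_eq_factorial_mul_choose, Nat.descFactorial_eq_prod_range, Nat.cast_prod]
    exact prod_congr rfl fun j hj ↦ (Nat.cast_sub ((mem_range.mp hj).le.trans hk)).symm
  have hfact : (k.factorial : R) * ∏ j ∈ Ico k n, (j + 1 : R) = n.factorial := by
    rw [← prod_range_add_one_eq_factorial, ← prod_range_add_one_eq_factorial,
      ← prod_range_mul_prod_Ico _ hk]
    push_cast
    rfl
  rw [splitProd, hdesc, ← hfact]
  push_cast
  ring

lemma splitProd_reflect (f : ℕ → R) {n k : ℕ} (hk : k ≤ n) :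
    splitProd (fun j ↦ f (n - j)) (fun j ↦ f (j + 1)) n (n - k) =
      splitProd (fun j ↦ f (n - j)) (fun j ↦ f (j + 1)) n k := by
  have h {i : ℕ} (hi : i ≤ n) : splitProd (fun j ↦ f (n - j)) (fun j ↦ f (j + 1)) n i =
      (∏ j ∈ Ico (n - i + 1) (n + 1), f j) * ∏ j ∈ Ico (i + 1) (n + 1), f j := by
    rw [splitProd, range_eq_Ico, prod_Ico_reflect f 0 (by omega), prod_Ico_add' f,
      Nat.sub_zero, Nat.sub_add_comm hi]
  rw [h hk, h (Nat.sub_le n k), Nat.sub_sub_self hk, mul_comm]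

lemma splitProd_eq_prod_mul_prod_div {K : Type*} [Field K] (f : ℕ → K) {g : ℕ → K}
    {n k : ℕ} (hg : ∀ j < k, g j ≠ 0) (hk : k ≤ n) :
    splitProd f g n k = (∏ j ∈ range n, g j) * ∏ j ∈ range k, f j / g j := by
  have hg' : ∏ j ∈ range k, g j ≠ 0 := prod_ne_zero_iff.mpr fun j hj ↦ hg j (mem_range.mp hj)
  rw [splitProd, ← prod_range_mul_prod_Ico g hk, prod_div_distrib]
  field_simp

end SplitProd

section WellPoised

variable {R : Type*} [CommRing R]

lemma sum_choose_succ_mul_add_two_mul (a d : R) (g : ℕ → R) (n : ℕ) :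
    ∑ k ∈ range (n + 2), ((n + 1).choose k : R) * (a + 2 * d * k) * g k =
      ∑ k ∈ range (n + 1), (n.choose k : R) *
        ((a + d * k) * g k + (a + d * (n + k + 2)) * g (k + 1)) := by
  have pascal (k : ℕ) : ((n + 1).choose (k + 1) : R) * (a + 2 * d * (k + 1 : ℕ)) =
      n.choose (k + 1) * (a + d * (k + 1)) + n.choose k * (a + d * (n + k + 2)) := by
    have hadd : ((n + 1).choose (k + 1) : R) = n.choose k + n.choose (k + 1) := by
      rw [Nat.choose_succ_succ, Nat.cast_add]
    have hmul : (n + 1) * (n.choose k : R) = (n + 1).choose (k + 1) * (k + 1) := by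
      exact_mod_cast congr_arg (Nat.cast (R := R)) (Nat.add_one_mul_choose_eq n k)
    push_cast
    linear_combination (a + d * (k + 1)) * hadd - d * hmul
  have hshift : ∑ k ∈ range (n + 1), (n.choose k : R) * (a + d * k) * g k =
      ∑ k ∈ range (n + 1), (n.choose (k + 1) : R) * (a + d * (k + 1)) * g (k + 1) + a * g 0 := by
    have := sum_range_succ (fun k : ℕ ↦ (n.choose k : R) * (a + d * k) * g k) (n + 1)
    rw [sum_range_succ'] at this
    simpa using this.symm
  calc
    _ = ∑ k ∈ range (n + 1), (n.choose (k + 1) * (a + d * (k + 1)) * g (k + 1) +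
          n.choose k * ((a + d * (n + k + 2)) * g (k + 1))) + a * g 0 := by
      rw [sum_range_succ']
      simp only [pascal]
      simp [add_mul, mul_assoc]
    _ = _ := by
      rw [sum_add_distrib, add_right_comm, ← hshift, ← sum_add_distrib]
      exact sum_congr rfl fun k _ ↦ by ring

lemma wellPoised_contiguous (d : R) {n k : ℕ} {a b c : R} (h : b + c = a + d) (hk : k ≤ n) :
    (a + d * k) * splitProd (fun j ↦ (b + d * j) * (a + d * j))
          (fun j ↦ (c + d * j) * (a + d * (n + 2 + j))) (n + 1) k +
        (a + d * (n + k + 2)) * splitProd (fun j ↦ (b + d * j) * (a + d * j))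
          (fun j ↦ (c + d * j) * (a + d * (n + 2 + j))) (n + 1) (k + 1) =
      a * (a + d * (2 * n + 2)) * ((a + d + 2 * d * k) *
        splitProd (fun j ↦ (b + d * j) * (a + d + d * j))
          (fun j ↦ (c + d + d * j) * (a + d + d * (n + 1 + j))) n k) := by
  have hshift := splitProd_shift (fun j ↦ a + d * j) (fun j ↦ a + d * (n + 2 + j)) hk
  have hsucc (x y : R) : x + d + d * y = x + d * (y + 1) := by ring
  rw [splitProd_succ_left _ _ hk, splitProd_succ_succ]
  simp only [splitProd_mul, hsucc, Nat.cast_add, Nat.cast_one, Nat.cast_zero, mul_zero, add_zero,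
    show ∀ j : ℕ, (n + 1 + j + 1 : R) = n + 2 + j from fun j ↦ by ring] at hshift ⊢
  generalize splitProd (fun j ↦ b + d * j) (fun j ↦ c + d * (j + 1)) n k = B
  generalize splitProd (fun j ↦ a + d * j) _ n k = A at hshift ⊢
  linear_combination (a + d + 2 * d * k) * B * hshift +
    (a + d * k) * (a + d * (n + 2 + k)) * B * A * h

/-- For `d = 1`, division by `(c)_n (a + n + 1)_n` turns this into the classical evaluation of the
terminating `₄F₃(a, 1 + a / 2, b, -n; a / 2, 1 + a - b, 1 + a + n; -1)`. -/
theorem sum_choose_mul_splitProd_wellPoised (d : R) (n : ℕ) {a b c : R} (h : b + c = a + d) :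
    ∑ k ∈ range (n + 1), (n.choose k : R) * (a + 2 * d * k) *
        splitProd (fun j ↦ (b + d * j) * (a + d * j))
          (fun j ↦ (c + d * j) * (a + d * (n + 1 + j))) n k =
      ∏ j ∈ range (2 * n + 1), (a + d * j) := by
  induction n generalizing a c with
  | zero => simp [splitProd]
  | succ n ih =>
    have hcast : (↑(n + 1) + 1 : R) = n + 2 := by push_cast; ring
    simp only [sum_choose_succ_mul_add_two_mul, hcast]
    calc
      _ = ∑ k ∈ range (n + 1), a * (a + d * (2 * n + 2)) * ((n.choose k : R) * (a + d + 2 * d * k) *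
            splitProd (fun j ↦ (b + d * j) * (a + d + d * j))
              (fun j ↦ (c + d + d * j) * (a + d + d * (n + 1 + j))) n k) := by
        refine sum_congr rfl fun k hk ↦ ?_
        rw [wellPoised_contiguous d h (mem_range_succ_iff.mp hk)]
        ring
      _ = a * (a + d * (2 * n + 2)) * ∏ j ∈ range (2 * n + 1), (a + d + d * j) := by
        rw [← mul_sum, ih (by linear_combination h)]
      _ = ∏ j ∈ range (2 * (n + 1) + 1), (a + d * j) := by
        have hsucc (j : ℕ) : a + d * (j + 1 : ℕ) = a + d + d * j := by push_cast; ring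
        rw [show 2 * (n + 1) + 1 = 2 * n + 1 + 1 + 1 by ring, prod_range_succ' _ (2 * n + 1 + 1),
          prod_range_succ _ (2 * n + 1)]
        simp only [hsucc]
        push_cast
        ring

end WellPoised

section Deformation

variable {R S : Type*} [CommRing R] [CommRing S]

/-- The odd cubic `x (x ^ 2 - y)`, a deformation of `x ^ 3` with parameter `y`. -/
def oddCubic (y x : R) : R := x * (x ^ 2 - y)

lemma oddCubic_neg (y x : R) : oddCubic y (-x) = -oddCubic y x := by
  simp only [oddCubic]
  ring

lemma oddCubic_zero_left (x : R) : oddCubic 0 x = x ^ 3 := by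
  simp only [oddCubic]
  ring

/-- The denominator of the deformed sum: the product of the deformations of `(d (j + 1)) ^ 3` over
`j < n`. -/
def deformedDenom (d : R) (n : ℕ) (y : R) : R := ∏ j ∈ range n, oddCubic y (d * (j + 1))

lemma deformedDenom_zero_right (d : R) (n : ℕ) :
    deformedDenom d n 0 = (d ^ n * n.factorial) ^ 3 := by
  simp only [deformedDenom, oddCubic_zero_left, prod_pow, prod_mul_distrib, prod_const, card_range]
  rw [← prod_range_add_one_eq_factorial]
  push_cast
  rfl

/-- The numerator, over the common denominator `deformedDenom d n y`, of the deformation of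
`∑ k ≤ n, (-1) ^ k (2 d k + 1) (1 / d)_k ^ 3 / k! ^ 3` that replaces each cube
`((d j + 1) / (d (j + 1))) ^ 3` by the quotient of the corresponding odd cubics. -/
def deformedNumer (d : R) (n : ℕ) (y : R) : R :=
  ∑ k ∈ range (n + 1), (-1) ^ k * (2 * d * k + 1) *
    splitProd (fun j ↦ oddCubic y (d * j + 1)) (fun j ↦ oddCubic y (d * (j + 1))) n k

/-- The difference between the deformed sum and `(-1) ^ n (d n + 1)`, cleared of denominators. -/
def deformedError (d : R) (n : ℕ) (y : R) : R :=
  deformedNumer d n y - (-1) ^ n * (d * n + 1) * deformedDenom d n y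

lemma map_deformedError (φ : R →+* S) (d : R) (n : ℕ) (y : R) :
    φ (deformedError d n y) = deformedError (φ d) n (φ y) := by
  simp [deformedError, deformedNumer, deformedDenom, splitProd, oddCubic, map_ofNat]

lemma deformedDenom_mul_add_one_sq (d : R) (n : ℕ) :
    (-1) ^ n * (d * n + 1) * deformedDenom d n ((d * n + 1) ^ 2) =
      d ^ n * n.factorial * ∏ j ∈ range (2 * n + 1), (1 + d * j) := by
  have hfactor (j : ℕ) : oddCubic ((d * n + 1) ^ 2) (d * (j + 1)) =
      d * (j + 1 : ℕ) * ((d * (j + 1) - (d * n + 1)) * (1 + d * (n + 1 + j : ℕ))) := by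
    simp only [oddCubic]
    push_cast
    ring
  have hreflect : ∏ j ∈ range n, (d * (j + 1) - (d * n + 1)) =
      (-1) ^ n * ∏ j ∈ range n, (1 + d * j) := by
    calc
      _ = ∏ j ∈ range n, -(1 + d * (n - 1 - j : ℕ)) := by
        refine prod_congr rfl fun j hj ↦ ?_
        rw [Nat.sub_sub, Nat.cast_sub (by have := mem_range.mp hj; omega)]
        push_cast
        ring
      _ = _ := by
        rw [prod_neg, card_range, prod_range_reflect (fun j : ℕ ↦ 1 + d * (j : R))]
  have hsign : ((-1 : R) ^ n) * (-1) ^ n = 1 := pow_mul_pow_eq_one _ (by simp)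
  simp only [deformedDenom, hfactor, prod_mul_distrib, prod_const, card_range, hreflect,
    ← Nat.cast_prod, prod_range_add_one_eq_factorial]
  rw [show 2 * n + 1 = n + 1 + n by ring, prod_range_add, prod_range_succ]
  linear_combination d ^ n * n.factorial * (∏ j ∈ range n, (1 + d * j)) * (d * n + 1) *
    (∏ j ∈ range n, (1 + d * (n + 1 + j : ℕ))) * hsign

lemma deformedNumer_mul_add_one_sq (d : R) (n : ℕ) :
    deformedNumer d n ((d * n + 1) ^ 2) =
      d ^ n * n.factorial * ∏ j ∈ range (2 * n + 1), (1 + d * j) := by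
  rw [← sum_choose_mul_splitProd_wellPoised d n
    (show d * n + 2 + (d - (d * n + 1)) = 1 + d by ring), deformedNumer, mul_sum]
  refine sum_congr rfl fun k hk ↦ ?_
  have hnum (j : ℕ) : oddCubic ((d * n + 1) ^ 2) (d * j + 1) =
      -(d * (n - j)) * ((d * n + 2 + d * j) * (1 + d * j)) := by
    simp only [oddCubic]
    ring
  have hden (j : ℕ) : oddCubic ((d * n + 1) ^ 2) (d * (j + 1)) =
      d * (j + 1) * ((d - (d * n + 1) + d * j) * (1 + d * (n + 1 + j))) := by
    simp only [oddCubic]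
    ring
  have hk : k ≤ n := mem_range_succ_iff.mp hk
  have hsign : ((-1 : R) ^ k) * (-1) ^ k = 1 := pow_mul_pow_eq_one _ (by simp)
  simp only [hnum, hden]
  rw [splitProd_mul, splitProd_neg_left, splitProd_const_mul d _ _ hk, splitProd_natCast_sub hk]
  linear_combination (2 * d * k + 1) * d ^ n * n.factorial * n.choose k *
    splitProd (fun j ↦ (d * n + 2 + d * j) * (1 + d * j))
      (fun j ↦ (d - (d * n + 1) + d * j) * (1 + d * (n + 1 + j))) n k * hsign

lemma deformedError_mul_add_one_sq (d : R) (n : ℕ) : deformedError d n ((d * n + 1) ^ 2) = 0 := by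
  rw [deformedError, deformedDenom_mul_add_one_sq, deformedNumer_mul_add_one_sq, sub_self]

lemma deformedError_eq_zero_of_mul_add_one_eq_zero {d : R} {n : ℕ} (h : d * n + 1 = 0) (y : R) :
    deformedError d n y = 0 := by
  have hneg (j : ℕ) (hj : j < n) : oddCubic y (d * j + 1) = -oddCubic y (d * (n - j : ℕ)) := by
    rw [← oddCubic_neg, Nat.cast_sub hj.le]
    congr 1
    linear_combination h
  let f : ℕ → R := fun i ↦ oddCubic y (d * i)
  calc
    deformedError d n y = deformedNumer d n y := by simp [deformedError, h]
    _ = d * ∑ k ∈ range (n + 1), (2 * k - n : R) *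
          splitProd (fun j ↦ f (n - j)) (fun j ↦ f (j + 1)) n k := by
      rw [deformedNumer, mul_sum]
      refine sum_congr rfl fun k hk ↦ ?_
      have hk : k ≤ n := mem_range_succ_iff.mp hk
      rw [splitProd_congr (f' := fun j ↦ -f (n - j)) (g' := fun j ↦ f (j + 1))
        (fun j hj ↦ hneg j (hj.trans_le hk)) (fun j _ ↦ by simp [f]), splitProd_neg_left]
      have hsign : ((-1 : R) ^ k) * (-1) ^ k = 1 := pow_mul_pow_eq_one _ (by simp)
      linear_combination (2 * d * k + 1) *
        splitProd (fun j ↦ f (n - j)) (fun j ↦ f (j + 1)) n k * hsign +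
        splitProd (fun j ↦ f (n - j)) (fun j ↦ f (j + 1)) n k * h
    _ = 0 := by
      rw [sum_two_mul_sub_mul_eq_zero fun k hk ↦ splitProd_reflect f hk, mul_zero]

open Polynomial in
lemma mul_dvd_deformedError_sub (d : R) (n : ℕ) (y z : R) :
    (d * n + 1) * (y - z) ∣ deformedError d n y - deformedError d n z := by
  have hdvd : C (d * n + 1) ∣ deformedError (C d) n (X : R[X]) := by
    -- The error vanishes in the quotient of `R[X]` by `d n + 1`.
    rw [← Ideal.Quotient.eq_zero_iff_dvd, map_deformedError]
    refine deformedError_eq_zero_of_mul_add_one_eq_zero ?_ _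
    simpa using (Ideal.Quotient.eq_zero_iff_dvd (C (d * n + 1)) (C (d * n + 1))).mpr dvd_rfl
  obtain ⟨Q, hQ⟩ := hdvd
  have heval (x : R) : deformedError d n x = (d * n + 1) * Q.eval x := by
    have := congr_arg (evalRingHom x) hQ
    rw [map_deformedError] at this
    simpa using this
  rw [heval, heval, ← mul_sub]
  exact mul_dvd_mul_left _ (sub_dvd_eval_sub y z Q)

lemma pow_three_dvd_deformedError_zero (d : R) (n : ℕ) :
    (d * n + 1) ^ 3 ∣ deformedError d n 0 := by
  have h := mul_dvd_deformedError_sub d n 0 ((d * n + 1) ^ 2)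
  rwa [deformedError_mul_add_one_sq, sub_zero, zero_sub, mul_neg, neg_dvd, ← pow_succ'] at h

end Deformation

lemma poch_one_div_div_factorial {d : ℚ} (hd : d ≠ 0) (k : ℕ) :
    poch (1 / d) k / k.factorial = ∏ j ∈ range k, (d * j + 1) / (d * (j + 1)) := by
  rw [poch, ← prod_range_add_one_eq_factorial, Nat.cast_prod, ← prod_div_distrib]
  refine prod_congr rfl fun j _ ↦ ?_
  have hj : (j + 1 : ℚ) ≠ 0 := by positivity
  push_cast
  field_simp
  ring

lemma sum_poch_mul_deformedDenom {d : ℚ} (hd : d ≠ 0) (n : ℕ) :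
    (∑ k ∈ range (n + 1),
      (-1) ^ k * (2 * d * k + 1) * poch (1 / d) k ^ 3 / (k.factorial : ℚ) ^ 3) *
        deformedDenom d n 0 = deformedNumer d n 0 := by
  have hden (j : ℕ) : (d * (j + 1)) ^ 3 ≠ 0 := pow_ne_zero 3 (mul_ne_zero hd (by positivity))
  rw [deformedNumer, sum_mul]
  refine sum_congr rfl fun k hk ↦ ?_
  simp only [deformedDenom, oddCubic_zero_left]
  rw [splitProd_eq_prod_mul_prod_div _ (fun j _ ↦ hden j) (mem_range_succ_iff.mp hk),
    mul_div_assoc, ← div_pow, poch_one_div_div_factorial hd, ← prod_pow]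
  simp only [div_pow]
  ring

lemma norm_padic_ratCast_le_of_mul_intCast_eq {p : ℕ} [Fact p.Prime] {q : ℚ} {u z : ℤ}
    {m : ℕ} (h : q * u = z) (hu : ¬ (p : ℤ) ∣ u) (hz : (p : ℤ) ^ m ∣ z) :
    ‖(q : ℚ_[p])‖ ≤ (p : ℝ) ^ (-m : ℤ) := by
  have hu' : ‖(u : ℚ_[p])‖ = 1 :=
    (Padic.norm_int_le_one u).eq_of_not_lt (mt Padic.norm_intCast_lt_one_iff.mp hu)
  have hq : ‖(q : ℚ_[p])‖ = ‖(z : ℚ_[p])‖ := by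
    rw [← Rat.cast_intCast z, ← h, Rat.cast_mul, norm_mul, Rat.cast_intCast, hu', mul_one]
  rw [hq]
  exact (Padic.norm_int_le_pow_iff_dvd z m).mpr (mod_cast hz)

/-- The cases `d = 2, 3, 4` include Van Hamme's supercongruences (B.2), (E.2) and (F.2). -/
theorem stmt16_general (p : ℕ) [Fact p.Prime] (d : ℤ) (n : ℕ) (hn : n < p)
    (hdvd : (p : ℤ) ∣ d * n + 1) :
    ‖(((∑ k ∈ range (n + 1),
          (-1 : ℚ) ^ k * (2 * d * k + 1) * poch (1 / d) k ^ 3 / (k.factorial : ℚ) ^ 3) -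
        (-1) ^ n * (d * n + 1) : ℚ) : ℚ_[p])‖ ≤ (p : ℝ) ^ (-3 : ℤ) := by
  have hp : Prime (p : ℤ) := Nat.prime_iff_prime_int.mp Fact.out
  have hd : ¬ (p : ℤ) ∣ d := fun h ↦
    hp.not_dvd_one ((Int.dvd_add_right (h.mul_right n)).mp hdvd)
  have hfact : ¬ (p : ℤ) ∣ n.factorial := by
    rw [Int.natCast_dvd_natCast, (Fact.out : p.Prime).dvd_factorial]
    exact hn.not_ge
  have hden : ¬ (p : ℤ) ∣ (d ^ n * n.factorial) ^ 3 := fun h ↦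
    (hp.dvd_or_dvd (hp.dvd_of_dvd_pow h)).elim (fun h ↦ hd (hp.dvd_of_dvd_pow h)) hfact
  have hd0 : (d : ℚ) ≠ 0 := fun h ↦ hd (by simp [Int.cast_eq_zero.mp h])
  refine norm_padic_ratCast_le_of_mul_intCast_eq (z := deformedError d n 0) ?_ hden
    ((pow_dvd_pow_of_dvd hdvd 3).trans (pow_three_dvd_deformedError_zero d n))
  have hcast := map_deformedError (Int.castRingHom ℚ) d n 0
  rw [eq_intCast, eq_intCast, map_zero] at hcast
  rw [hcast, deformedError, ← sum_poch_mul_deformedDenom hd0, ← sub_mul, deformedDenom_zero_right]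
  push_cast
  rfl

theorem stmt16 (p : ℕ) [Fact p.Prime] (hp4 : p % 4 = 1) :
    ‖(((∑ k ∈ Finset.range ((p - 1) / 4 + 1),
          (-1 : ℚ) ^ k * (8 * (k : ℚ) + 1) * poch (1/4) k ^ 3 /
            ((k.factorial : ℚ)) ^ 3) -
        ((-1 : ℚ) ^ ((p - 1) / 4) * p) : ℚ) : ℚ_[p])‖ ≤
      (p : ℝ) ^ (-3 : ℤ) := by
  have hp : (p : ℤ) = 4 * ((p - 1) / 4 : ℕ) + 1 := by omega
  have hpQ : (p : ℚ) = 4 * ((p - 1) / 4 : ℕ) + 1 := mod_cast hp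
  have h := stmt16_general p 4 ((p - 1) / 4) (by omega) hp.dvd
  rwa [Int.cast_ofNat, ← hpQ, show (2 * 4 : ℚ) = 8 by norm_num] at h
end
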